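/- Let R be a commutative noetherian local ring. Let X and Y be classes of finitely generated R-modules, each containing all finite-length R-modules. Then V(⋂_{i>0, M ∈ X, N ∈ Y} Ann_R Ext_R^i(M,N)) = V(⋂_{i>0, M, N} Ann_R Ext_R^i(M,N)), where in the right-hand side M and N range over all finitely generated R-modules. In particular, the set V(⋂_{i>0, M ∈ X, N ∈ Y} Ann_R Ext_R^i(M,N)) is the same for all such pairs of classes X, Y. -/

import Mathlib

open CategoryTheory IsLocalRing

noncomputable section

/-- The `i`-th Tor module of two `R`-modules, as an object of `ModuleCat R`. -/
def TorMod (R : Type) [CommRing R] (i : ℕ) (M N : ModuleCat.{0} R) : ModuleCat.{0} R :=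
  ((Tor (ModuleCat.{0} R) i).obj M).obj N

/-- The `i`-th Ext module of two `R`-modules, as an object of `ModuleCat R`. -/
def ExtMod (R : Type) [CommRing R] (i : ℕ) (M N : ModuleCat.{0} R) : ModuleCat.{0} R :=
  ((Ext R (ModuleCat.{0} R) i).obj (Opposite.op M)).obj N

/-- Integer-indexed Tor: `Tor_n = 0` for `n < 0`. -/
def TorZ (R : Type) [CommRing R] (n : ℤ) (M N : ModuleCat.{0} R) : ModuleCat.{0} R :=
  if 0 ≤ n then TorMod R n.toNat M N else ModuleCat.of R PUnit

/-- Integer-indexed Ext: `Ext^n = 0` for `n < 0`. -/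
def ExtZ (R : Type) [CommRing R] (n : ℤ) (M N : ModuleCat.{0} R) : ModuleCat.{0} R :=
  if 0 ≤ n then ExtMod R n.toNat M N else ModuleCat.of R PUnit

/-- The depth of a module `N` over a local ring `S`, defined as the infimum of the set of
integers `i` such that `Ext^i(k, N) ≠ 0`, where `k` is the residue field of `S`
(`⊤` if no such `i` exists). -/
def moduleDepth (S : Type) [CommRing S] [IsLocalRing S] (N : Type) [AddCommGroup N]
    [Module S N] : ℕ∞ :=
  sInf {i : ℕ∞ | ∃ j : ℕ, i = (j : ℕ∞) ∧
    Nontrivial (ExtMod S j (ModuleCat.of S (ResidueField S)) (ModuleCat.of S N))}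

/-- A local ring is regular if it is noetherian and its maximal ideal can be generated by
(Krull dimension of `S`)-many elements. -/
def IsRegularLocal (S : Type) [CommRing S] [IsLocalRing S] : Prop :=
  IsNoetherianRing S ∧ ∃ s : Finset S, Ideal.span (s : Set S) = maximalIdeal S ∧
    (s.card : WithBot ℕ∞) = ringKrullDim S

/-- A local ring is Cohen-Macaulay if its depth (as a module over itself) equals its
Krull dimension. -/
def IsCMLocalRing (R : Type) [CommRing R] [IsLocalRing R] : Prop :=
  (moduleDepth R R : WithBot ℕ∞) = ringKrullDim R

/-- A module `M` over a local ring `R` is maximal Cohen-Macaulay if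
`depth M_p ≥ dim R_p` for every prime ideal `p` of `R`. -/
def IsMCMModule (R : Type) [CommRing R] [IsLocalRing R] (M : Type) [AddCommGroup M]
    [Module R M] : Prop :=
  ∀ (p : Ideal R) [p.IsPrime],
    ringKrullDim (Localization.AtPrime p) ≤
      (moduleDepth (Localization.AtPrime p) (LocalizedModule p.primeCompl M) : WithBot ℕ∞)

/-- Membership in `CM(R)`: finitely generated maximal Cohen-Macaulay modules. -/
def MemCM (R : Type) [CommRing R] [IsLocalRing R] (M : ModuleCat.{0} R) : Prop :=
  Module.Finite R M ∧ IsMCMModule R M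

/-- Membership in `CM₀(R)`: finitely generated maximal Cohen-Macaulay modules that are
locally free on the punctured spectrum. -/
def MemCM0 (R : Type) [CommRing R] [IsLocalRing R] (M : ModuleCat.{0} R) : Prop :=
  Module.Finite R M ∧ IsMCMModule R M ∧
    ∀ (p : Ideal R) [p.IsPrime], p ≠ maximalIdeal R →
      Module.Free (Localization.AtPrime p) (LocalizedModule p.primeCompl M)

/-- The singular locus of `R`: primes `p` such that `R_p` is not regular. -/
def singularLocus (R : Type) [CommRing R] : Set (PrimeSpectrum R) :=
  {p | ¬ IsRegularLocal (Localization.AtPrime p.asIdeal)}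

/-- The nonfree locus of a module `M`: primes `p` such that `M_p` is not a free
`R_p`-module. -/
def nonfreeLocus (R : Type) [CommRing R] (M : Type) [AddCommGroup M] [Module R M] :
    Set (PrimeSpectrum R) :=
  {p | ¬ Module.Free (Localization.AtPrime p.asIdeal)
        (LocalizedModule p.asIdeal.primeCompl M)}

/-- `K` is a first syzygy of `N` in a minimal free resolution: there is a surjection
`f : R^n → N` with `ker f ⊆ m·R^n` and `K ≅ ker f`. -/
def IsMinimalSyzygy1 (R : Type) [CommRing R] [IsLocalRing R] (N K : ModuleCat.{0} R) : Prop :=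
  ∃ (n : ℕ) (f : (Fin n → R) →ₗ[R] N), Function.Surjective f ∧
    LinearMap.ker f ≤ (maximalIdeal R) • (⊤ : Submodule R (Fin n → R)) ∧
    Nonempty (K ≃ₗ[R] LinearMap.ker f)

/-- `K` is a `d`-th syzygy of `N` in a minimal free resolution. -/
def IsMinimalSyzygy (R : Type) [CommRing R] [IsLocalRing R] :
    ℕ → ModuleCat.{0} R → ModuleCat.{0} R → Prop
  | 0, N, K => Nonempty ((K : Type) ≃ₗ[R] N)
  | d + 1, N, K => ∃ L : ModuleCat.{0} R, IsMinimalSyzygy1 R N L ∧ IsMinimalSyzygy R d L K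

/-- A module is indecomposable if it is nonzero and is not isomorphic to the direct sum of
two nonzero modules. -/
def IndecomposableModule (R : Type) [CommRing R] (M : Type) [AddCommGroup M] [Module R M] :
    Prop :=
  Nontrivial M ∧ ∀ (A B : Type) [AddCommGroup A] [Module R A] [AddCommGroup B] [Module R B],
    Nonempty (M ≃ₗ[R] A × B) → (Subsingleton A ∨ Subsingleton B)

theorem aux_mono {R N : Type} [CommRing R] [AddCommGroup N] [Module R N] (I : Ideal R)
    {A B : Submodule R N} (h : A ≤ B) : I • A ≤ I • B := Submodule.smul_mono le_rfl h

theorem aux_bridge (R : Type) [CommRing R] (i : ℕ) (hi : 0 < i) (M N : ModuleCat.{0} R) (a : R) :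
    a ∈ Module.annihilator R (ExtMod R i M N) ↔ ∀ e : Abelian.Ext.{0} M N i, a • e = 0 := by
  obtain ⟨p, rfl⟩ : ∃ p, i = p + 1 := ⟨i - 1, by omega⟩
  let P : ProjectiveResolution M := projectiveResolution M
  have key1 : (∀ e : Abelian.Ext.{0} M N (p + 1), a • e = 0) ↔
      ∀ f : P.complex.X (p + 1) ⟶ N, P.complex.d (p + 2) (p + 1) ≫ f = 0 →
        ∃ g : P.complex.X p ⟶ N, P.complex.d (p + 1) p ≫ g = a • f := by
    constructor
    · intro h f hf
      have h1 := h (P.extMk f (p + 2) rfl hf)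
      rw [Abelian.Ext.smul_eq_comp_mk₀, P.extMk_comp_mk₀, P.extMk_eq_zero_iff _ _ _ _ p rfl] at h1
      simpa using h1
    · intro h e
      obtain ⟨f, hf, rfl⟩ := P.extMk_surjective e (p + 2) rfl
      rw [Abelian.Ext.smul_eq_comp_mk₀, P.extMk_comp_mk₀, P.extMk_eq_zero_iff _ _ _ _ p rfl]
      simpa using h f hf
  rw [key1]
  let K := P.complex.linearYonedaObj R N
  let e1 : ExtMod R (p + 1) M N ≅ (K.sc' p (p + 1) (p + 2)).moduleCatLeftHomologyData.H :=
    P.isoExt (p + 1) N ≪≫ (ShortComplex.homologyMapIso (K.isoSc' p (p + 1) (p + 2) (by simp) (by simp))) ≪≫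
      ShortComplex.moduleCatHomologyIso _
  rw [e1.toLinearEquiv.annihilator_eq, Module.mem_annihilator]
  change (∀ x : (LinearMap.ker (K.sc' p (p + 1) (p + 2)).g.hom ⧸ LinearMap.range (K.sc' p (p + 1) (p + 2)).moduleCatToCycles), a • x = 0) ↔ _
  constructor
  · intro h f hf
    have h1 := h (Submodule.Quotient.mk ⟨f, hf⟩)
    rw [← Submodule.Quotient.mk_smul, Submodule.Quotient.mk_eq_zero] at h1
    obtain ⟨g, hg⟩ := h1
    exact ⟨g, congrArg Subtype.val hg⟩
  · intro h x
    obtain ⟨⟨f, hf⟩, rfl⟩ := Submodule.Quotient.mk_surjective _ x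
    obtain ⟨g, hg⟩ := h f hf
    rw [← Submodule.Quotient.mk_smul, Submodule.Quotient.mk_eq_zero]
    exact ⟨g, Subtype.ext hg⟩

theorem aux_fl (R : Type) [CommRing R] [IsNoetherianRing R] [IsLocalRing R]
    (M : Type) [AddCommGroup M] [Module R M] [Module.Finite R M] (n : ℕ) :
    IsFiniteLength R (M ⧸ ((maximalIdeal R) ^ n • ⊤ : Submodule R M)) := by
  rw [isFiniteLength_iff_isNoetherian_isArtinian]
  refine ⟨inferInstance, ?_⟩
  have : IsArtinianRing (R ⧸ (maximalIdeal R) ^ n) := by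
    rcases Nat.eq_zero_or_pos n with rfl | hn
    · rw [pow_zero, Ideal.one_eq_top]
      have : Subsingleton (R ⧸ (⊤ : Ideal R)) := Ideal.Quotient.subsingleton_iff.mpr rfl
      infer_instance
    · apply IsLocalRing.quotient_artinian_of_mem_minimalPrimes_of_isLocalRing
      rw [← Ideal.radical_minimalPrimes, Ideal.radical_pow _ hn.ne', Ideal.radical_minimalPrimes,
        Ideal.minimalPrimes_eq_subsingleton_self]
      rfl
  have : Module.Finite (R ⧸ (maximalIdeal R) ^ n) (M ⧸ ((maximalIdeal R) ^ n • ⊤ : Submodule R M)) :=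
    Module.Finite.of_restrictScalars_finite R _ _
  exact isArtinian_of_surjective_algebraMap (S := R) (R := R ⧸ (maximalIdeal R) ^ n) (M := (M ⧸ ((maximalIdeal R) ^ n • ⊤ : Submodule R M))) Ideal.Quotient.mk_surjective

theorem aux_pi (R : Type) [CommRing R] (I : Ideal R) (N : Type) [AddCommGroup N] [Module R N]
    (r : ℕ) (v : Fin r → N) (hv : ∀ j, v j ∈ (I • ⊤ : Submodule R N)) :
    v ∈ (I • ⊤ : Submodule R (Fin r → N)) := by
  rw [show v = ∑ j, LinearMap.single R (fun _ : Fin r => N) j (v j) by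
    simp [Finset.univ_sum_single]]
  refine Submodule.sum_mem _ fun j _ => ?_
  have := Submodule.mem_map_of_mem (f := LinearMap.single R (fun _ : Fin r => N) j) (hv j)
  rw [Submodule.map_smul''] at this
  exact aux_mono _ le_top this

/-- Artin-Rees for an injective map. -/
theorem aux_AR (R : Type) [CommRing R] [IsNoetherianRing R] (I : Ideal R) (H V : Type)
    [AddCommGroup H] [Module R H] [AddCommGroup V] [Module R V] [Module.Finite R V]
    (ρ : H →ₗ[R] V) (hρ : Function.Injective ρ) (t : ℕ) :
    ∃ n, ∀ h : H, ρ h ∈ (I ^ n • ⊤ : Submodule R V) → h ∈ (I ^ t • ⊤ : Submodule R H) := by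
  obtain ⟨k, hk⟩ := Ideal.exists_pow_inf_eq_pow_smul I (LinearMap.range ρ)
  refine ⟨t + k, fun h hh => ?_⟩
  have h1 : ρ h ∈ (I ^ (t + k) • ⊤ ⊓ LinearMap.range ρ : Submodule R V) := ⟨hh, h, rfl⟩
  rw [hk _ (by omega), Nat.add_sub_cancel] at h1
  have h2 := aux_mono (I ^ t) inf_le_right h1
  rw [LinearMap.range_eq_map, ← Submodule.map_smul''] at h2
  obtain ⟨h', hh', e⟩ := h2
  rwa [← hρ e]

theorem aux_cov (R : Type) [CommRing R] [IsNoetherianRing R] (I : Ideal R) (N : ModuleCat.{0} R)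
    [Module.Finite R N] (t i : ℕ) : ∀ (M : ModuleCat.{0} R) [Module.Finite R M],
    ∃ n, ∀ e : Abelian.Ext.{0} M (ModuleCat.of R ↥(I ^ n • ⊤ : Submodule R N)) i,
      e.comp (Abelian.Ext.mk₀ (Y := N) (ModuleCat.ofHom (I ^ n • ⊤ : Submodule R N).subtype)) (add_zero i) ∈
        (I ^ t • ⊤ : Submodule R (Abelian.Ext.{0} M N i)) := by
  induction i with
  | zero =>
    intro M _
    obtain ⟨r, g, hg⟩ := Module.Finite.exists_fin' R M
    let E : Abelian.Ext.{0} M N 0 ≃ₗ[R] (M →ₗ[R] N) :=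
      Abelian.Ext.linearEquiv₀.trans ModuleCat.homLinearEquiv
    let ρ : Abelian.Ext.{0} M N 0 →ₗ[R] (Fin r → N) :=
      LinearMap.pi (fun j => LinearMap.applyₗ (g (Pi.single j 1))) ∘ₗ
        E.toLinearMap
    have hρ : Function.Injective ρ := by
      refine Function.Injective.comp (g := LinearMap.pi (fun j => LinearMap.applyₗ (g (Pi.single j 1))))
        ?_ E.injective
      intro u v huv
      have : u ∘ₗ g = v ∘ₗ g := by
        ext j
        simpa using congrFun huv j
      exact LinearMap.cancel_right hg |>.mp this
    obtain ⟨n, hn⟩ := aux_AR R I _ _ ρ hρ t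
    refine ⟨n, fun e => hn _ (aux_pi _ _ _ _ _ fun j => ?_)⟩
    obtain ⟨f, rfl⟩ := Abelian.Ext.homEquiv₀.symm.surjective e
    have : ρ ((Abelian.Ext.homEquiv₀.symm f).comp (Abelian.Ext.mk₀ (Y := N) (ModuleCat.ofHom (I ^ n • ⊤ : Submodule R N).subtype)) (add_zero 0)) j
       = (I ^ n • ⊤ : Submodule R N).subtype (f.hom (g (Pi.single j 1))) := by
      simp only [Abelian.Ext.homEquiv₀_symm_apply, Abelian.Ext.mk₀_comp_mk₀]
      have h5 : ∀ u : M ⟶ N, (Abelian.Ext.linearEquiv₀ (R := R)) (Abelian.Ext.mk₀ u) = u := fun u => by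
        rw [← Abelian.Ext.linearEquiv₀_symm_apply (R := R), LinearEquiv.apply_symm_apply]
      simp [ρ, E, h5]
    rw [this]
    exact (f.hom (g (Pi.single j 1))).2
  | succ i ih =>
    intro M _
    obtain ⟨r, g, hg⟩ := Module.Finite.exists_fin' R M
    have hS := LinearMap.shortExact_shortComplexKer hg
    have : Projective (g.shortComplexKer).X₂ := ModuleCat.projective_of_categoryTheory_projective _
    obtain ⟨n, hn⟩ := ih (g.shortComplexKer).X₁
    refine ⟨n, fun e => ?_⟩
    obtain ⟨e', rfl⟩ := precomp_extClass_surjective_of_projective_X₂ _ hS i e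
    have h2 := Submodule.mem_map_of_mem (f := Abelian.Ext.precompOfLinear hS.extClass R N (add_comm 1 i)) (hn e')
    rw [Submodule.map_smul''] at h2
    have h3 := aux_mono (I ^ t) le_top h2
    simpa using h3

theorem aux_contra (R : Type) [CommRing R] [IsNoetherianRing R] (I : Ideal R) (N : ModuleCat.{0} R)
    (k : ℕ) (hk : ∀ x ∈ (I ^ k • ⊤ : Submodule R N), x = 0) (i : ℕ) :
    ∀ (M : ModuleCat.{0} R) [Module.Finite R M],
    ∃ n, ∀ (M' : ModuleCat.{0} R) (φ : M' ⟶ M), (∀ x, φ.hom x ∈ (I ^ n • ⊤ : Submodule R M)) →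
      ∀ e : Abelian.Ext.{0} M N i, (Abelian.Ext.mk₀ φ).comp e (zero_add i) = 0 := by
  induction i with
  | zero =>
    intro M _
    refine ⟨k, fun M' φ hφ e => ?_⟩
    obtain ⟨f, rfl⟩ := Abelian.Ext.homEquiv₀.symm.surjective e
    simp only [Abelian.Ext.homEquiv₀_symm_apply, Abelian.Ext.mk₀_comp_mk₀]
    have : φ ≫ f = 0 := by
      ext x
      apply hk
      have := Submodule.mem_map_of_mem (f := f.hom) (hφ x)
      rw [Submodule.map_smul''] at this
      exact aux_mono _ le_top this
    rw [this, Abelian.Ext.mk₀_zero]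
  | succ i ih =>
    intro M _
    obtain ⟨r, g, hg⟩ := Module.Finite.exists_fin' R M
    have hS := LinearMap.shortExact_shortComplexKer hg
    have : Projective (g.shortComplexKer).X₂ := ModuleCat.projective_of_categoryTheory_projective _
    obtain ⟨t, ht⟩ := ih (g.shortComplexKer).X₁
    obtain ⟨n, hn⟩ := aux_AR R I _ _ (LinearMap.ker g).subtype (Submodule.injective_subtype _) t
    refine ⟨n, fun M' φ hφ e => ?_⟩
    obtain ⟨e', rfl⟩ := precomp_extClass_surjective_of_projective_X₂ _ hS i e
    -- lift
    have hS' := ModuleCat.shortExact_projectiveShortComplex M'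
    have hlift : ∃ ψ : (M'.projectiveShortComplex).X₂ →ₗ[R] (Fin r → R),
        (∀ x, ψ x ∈ (I ^ n • ⊤ : Submodule R (Fin r → R))) ∧
        g ∘ₗ ψ = φ.hom ∘ₗ (M'.projectiveShortComplex).g.hom := by
      let g' : ↥(I ^ n • ⊤ : Submodule R (Fin r → R)) →ₗ[R] ↥(I ^ n • ⊤ : Submodule R M) :=
        g.restrict (fun x hx => by
          have := Submodule.mem_map_of_mem (f := g) hx
          rw [Submodule.map_smul''] at this
          exact aux_mono _ le_top this)
      have hg' : Function.Surjective g' := by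
        rintro ⟨y, hy⟩
        rw [← LinearMap.range_eq_top.mpr hg, LinearMap.range_eq_map, ← Submodule.map_smul''] at hy
        obtain ⟨x, hx, rfl⟩ := hy
        exact ⟨⟨x, hx⟩, rfl⟩
      obtain ⟨ψ, hψ⟩ := Module.projective_lifting_property g'
        ((φ.hom ∘ₗ (M'.projectiveShortComplex).g.hom).codRestrict _ (fun x => hφ _)) hg'
      refine ⟨Submodule.subtype _ ∘ₗ ψ, fun x => (ψ x).2, ?_⟩
      refine LinearMap.ext fun x => ?_
      exact congrArg Subtype.val (LinearMap.congr_fun hψ x)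
    obtain ⟨ψ, hψ1, hψ2⟩ := hlift
    have hz : ∀ x, (M'.projectiveShortComplex).g.hom ((M'.projectiveShortComplex).f.hom x) = 0 :=
      fun x => (M'.projectiveShortComplex).moduleCat_zero_apply x
    let τ₁ : (M'.projectiveShortComplex).X₁ ⟶ (g.shortComplexKer).X₁ :=
      ModuleCat.ofHom ((ψ ∘ₗ (M'.projectiveShortComplex).f.hom).codRestrict (LinearMap.ker g)
        (fun x => by
          have := LinearMap.congr_fun hψ2 ((M'.projectiveShortComplex).f.hom x)
          simp only [LinearMap.comp_apply, hz, map_zero] at this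
          exact this))
    let F : M'.projectiveShortComplex ⟶ g.shortComplexKer :=
      { τ₁ := τ₁
        τ₂ := ModuleCat.ofHom ψ
        τ₃ := φ
        comm₁₂ := by ext x; rfl
        comm₂₃ := by
          ext1
          exact hψ2 }
    have h0 := ht _ τ₁ (fun x => hn _ (hψ1 _)) e'
    have hnat := ShortComplex.ShortExact.extClass_naturality hS' hS F
    have h1 : (Abelian.Ext.mk₀ φ).comp (hS.extClass.comp e' (add_comm 1 i)) (zero_add (i+1)) =
        ((Abelian.Ext.mk₀ F.τ₃).comp hS.extClass (zero_add 1)).comp e' (add_comm 1 i) :=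
      (Abelian.Ext.comp_assoc _ _ _ _ _ (by omega)).symm
    change (Abelian.Ext.mk₀ φ).comp (hS.extClass.comp e' (add_comm 1 i)) (zero_add (i+1)) = 0
    rw [h1, ← hnat, Abelian.Ext.comp_assoc (h₂₃ := zero_add i) (h := by omega)]
    change hS'.extClass.comp ((Abelian.Ext.mk₀ τ₁).comp e' _) _ = 0
    rw [h0, Abelian.Ext.comp_zero]

theorem aux_ses (R : Type) [CommRing R] (M : ModuleCat.{0} R) (A : Submodule R M) :
    (ModuleCat.shortComplexOfCompEqZero A.subtype A.mkQ (by ext; simp)).ShortExact :=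
  ModuleCat.shortComplex_shortExact _ (LinearMap.exact_subtype_mkQ A) A.injective_subtype
    A.mkQ_surjective

theorem aux_main (R : Type) [CommRing R] [IsNoetherianRing R] [IsLocalRing R] (a : R) (i : ℕ)
    (h : ∀ M N : ModuleCat.{0} R, IsFiniteLength R M → IsFiniteLength R N →
      ∀ e : Abelian.Ext.{0} M N i, a • e = 0)
    (M N : ModuleCat.{0} R) [Module.Finite R M] [Module.Finite R N] (e : Abelian.Ext.{0} M N i) :
    a • e = 0 := by
  have key : ∀ n, ∀ e : Abelian.Ext.{0} M
      (ModuleCat.of R (N ⧸ ((maximalIdeal R) ^ n • ⊤ : Submodule R N))) i, a • e = 0 := by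
    intro n e
    have hk : ∀ x ∈ ((maximalIdeal R) ^ n • ⊤ : Submodule R (N ⧸ ((maximalIdeal R) ^ n • ⊤ : Submodule R N))), x = 0 := by
      intro x hx
      rw [← Submodule.range_mkQ, LinearMap.range_eq_map, ← Submodule.map_smul''] at hx
      obtain ⟨y, hy, rfl⟩ := hx
      simpa using hy
    obtain ⟨m, hm⟩ := aux_contra R (maximalIdeal R)
      (ModuleCat.of R (N ⧸ ((maximalIdeal R) ^ n • ⊤ : Submodule R N))) n hk i M
    have hS := aux_ses R M ((maximalIdeal R) ^ m • ⊤ : Submodule R M)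
    obtain ⟨e', rfl⟩ := Abelian.Ext.contravariant_sequence_exact₂ hS _ e (hm _ _ (fun x => Subtype.property x) e)
    rw [← Abelian.Ext.comp_smul, h _ _ (aux_fl R M m) (aux_fl R N n), Abelian.Ext.comp_zero]
  have hall : a • e ∈ (⨅ t : ℕ, (maximalIdeal R) ^ t • ⊤ : Submodule R (Abelian.Ext.{0} M N i)) := by
    rw [Submodule.mem_iInf]
    intro t
    obtain ⟨n, hn⟩ := aux_cov R (maximalIdeal R) N t i M
    have hS := aux_ses R N ((maximalIdeal R) ^ n • ⊤ : Submodule R N)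
    obtain ⟨e', he'⟩ := Abelian.Ext.covariant_sequence_exact₂ M hS (a • e) (by
      rw [Abelian.Ext.smul_comp]; exact key n _)
    rw [← he']
    exact hn e'
  rw [Ideal.iInf_pow_smul_eq_bot_of_isLocalRing _ (maximalIdeal.isMaximal R).ne_top] at hall
  simpa using hall

/-- Let `R` be a noetherian local ring and let `X`, `Y` be classes of
finitely generated `R`-modules, each containing all finite-length modules. Then
`V(⋂_{i>0, M ∈ X, N ∈ Y} Ann Ext^i(M,N)) = V(⋂_{i>0, M, N f.g.} Ann Ext^i(M,N))`. -/
theorem stmt13 (R : Type) [CommRing R] [IsNoetherianRing R] [IsLocalRing R]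
    (X Y : Set (ModuleCat.{0} R))
    (hXfin : ∀ M ∈ X, Module.Finite R M) (hYfin : ∀ M ∈ Y, Module.Finite R M)
    (hXfl : ∀ M : ModuleCat.{0} R, IsFiniteLength R M → M ∈ X)
    (hYfl : ∀ M : ModuleCat.{0} R, IsFiniteLength R M → M ∈ Y) :
    PrimeSpectrum.zeroLocus
        ((⨅ (i : ℕ) (_ : 0 < i) (M : ModuleCat.{0} R) (_ : M ∈ X)
            (N : ModuleCat.{0} R) (_ : N ∈ Y),
            Module.annihilator R (ExtMod R i M N) : Ideal R) : Set R) =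
      PrimeSpectrum.zeroLocus
        ((⨅ (i : ℕ) (_ : 0 < i) (M : ModuleCat.{0} R) (_ : Module.Finite R M)
            (N : ModuleCat.{0} R) (_ : Module.Finite R N),
            Module.annihilator R (ExtMod R i M N) : Ideal R) : Set R) := by
  congr 2
  apply le_antisymm
  · intro a ha
    simp only [Submodule.mem_iInf] at ha ⊢
    intro i hi M hM N hN
    rw [aux_bridge R i hi]
    refine aux_main R a i (fun M' N' hM' hN' => ?_) M N
    exact (aux_bridge R i hi M' N' a).mp (ha i hi M' (hXfl M' hM') N' (hYfl N' hN'))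
  · intro a ha
    simp only [Submodule.mem_iInf] at ha ⊢
    intro i hi M hM N hN
    exact ha i hi M (hXfin M hM) N (hYfin N hN)

end
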